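/- arXiv:2305.10335 — 4 statements merged into one kernel-verified Lean document; each statement's English description precedes it below -/
import Mathlib

section
/- Let X be a random vector with values in EuclideanSpace ℝ (Fin n) whose distribution is the multivariate Gaussian measure with mean vector μ and symmetric positive semidefinite covariance matrix C. Then ‖X‖² has a (noncentral) chi-square distribution — i.e., there exist r : ℕ and ν ≥ 0 such that for all real t in some neighborhood of 0, E[exp(t·‖X‖²)] = exp(t·ν²/(1−2t))·(1−2t)^(−r/2) — if and only if C² = C and C μ = μ. Moreover, in that case r = rank C and ν = ‖μ‖. -/
open MeasureTheory ProbabilityTheory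
open scoped RealInnerProductSpace

/-- `X` is a random vector whose law is the multivariate Gaussian measure with mean `μ` and
covariance matrix `C`: every one-dimensional projection `⟪X, v⟫` is Gaussian with mean `⟪μ, v⟫`
and variance `⟪C v, v⟫`. -/
def IsMultivariateGaussian {Ω : Type*} [MeasurableSpace Ω] {n : ℕ}
    (P : Measure Ω) (X : Ω → EuclideanSpace ℝ (Fin n))
    (μ : EuclideanSpace ℝ (Fin n)) (C : Matrix (Fin n) (Fin n) ℝ) : Prop :=
  Measurable X ∧
    ∀ v : EuclideanSpace ℝ (Fin n),
      P.map (fun ω => ⟪X ω, v⟫) =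
        gaussianReal ⟪μ, v⟫ (⟪Matrix.toEuclideanLin C v, v⟫).toNNReal

/-- Exponential of a square under a one-dimensional Gaussian. -/
lemma gauss_exp_sq (m t : ℝ) (v : NNReal) (h : 0 < 1 - 2 * t * v) :
    ∫ x, Real.exp (t * x ^ 2) ∂(gaussianReal m v) =
      Real.exp (t * m ^ 2 / (1 - 2 * t * v) - 1 / 2 * Real.log (1 - 2 * t * v)) := by
  by_cases hv : v = 0
  · subst hv
    simp
  have hv' : (0 : ℝ) < v := by
    have := pos_iff_ne_zero.mpr hv
    exact_mod_cast this
  rw [integral_gaussianReal_eq_integral_smul hv]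
  set s : ℝ := 1 - 2 * t * v with hs
  have key : ∀ x : ℝ, gaussianPDFReal m v x • Real.exp (t * x ^ 2) =
      ((√(2 * Real.pi * v))⁻¹ * Real.exp (t * m ^ 2 / s)) *
        Real.exp (-(s / (2 * v)) * (x - m / s) ^ 2) := by
    intro x
    rw [gaussianPDFReal, smul_eq_mul, mul_assoc _ (Real.exp _), mul_assoc _ (Real.exp _),
      ← Real.exp_add, ← Real.exp_add]
    congr 2
    have hs' : s ≠ 0 := h.ne'
    have ht : t = (1 - s) / (2 * v) := by rw [hs]; field_simp; ring
    rw [ht]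
    field_simp
    ring
  simp_rw [key]
  rw [integral_const_mul, integral_sub_right_eq_self (fun x => Real.exp (-(s / (2 * v)) * x ^ 2)),
    integral_gaussian, sub_eq_add_neg, Real.exp_add]
  have e1 : Real.pi / (s / (2 * v)) = (2 * Real.pi * v) / s := by field_simp
  have e2 : Real.exp (-(1 / 2 * Real.log s)) = (√s)⁻¹ := by
    rw [Real.exp_neg, mul_comm, Real.sqrt_eq_rpow, Real.rpow_def_of_pos h]
  have e3 : √(2 * Real.pi * v) ≠ 0 := by positivity
  rw [e1, e2, Real.sqrt_div (by positivity)]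
  field_simp

/-- Joint law in an orthonormal eigenbasis. -/
lemma mgf_norm_sq {Ω : Type*} [MeasurableSpace Ω] {n : ℕ}
    (P : Measure Ω) [IsProbabilityMeasure P]
    (X : Ω → EuclideanSpace ℝ (Fin n))
    (μ : EuclideanSpace ℝ (Fin n)) (C : Matrix (Fin n) (Fin n) ℝ)
    (hX : IsMultivariateGaussian P X μ C)
    (b : OrthonormalBasis (Fin n) ℝ (EuclideanSpace ℝ (Fin n))) (l : Fin n → ℝ)
    (hl : ∀ i, 0 ≤ l i) (hb : ∀ i, Matrix.toEuclideanLin C (b i) = l i • b i) (t : ℝ)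
    (ht : ∀ i, 0 < 1 - 2 * t * l i) :
    ∫ ω, Real.exp (t * ‖X ω‖ ^ 2) ∂P =
      Real.exp (∑ i, (t * ⟪μ, b i⟫ ^ 2 / (1 - 2 * t * l i)
        - 1 / 2 * Real.log (1 - 2 * t * l i))) := by
  obtain ⟨hm, hX⟩ := hX
  have hmi : ∀ v, Measurable (fun ω => ⟪X ω, v⟫) := fun v => hm.inner_const
  have hvar : ∀ c : Fin n → ℝ, ⟪Matrix.toEuclideanLin C (∑ i, c i • b i), ∑ i, c i • b i⟫
      = ∑ i, l i * c i ^ 2 := by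
    intro c
    have : Matrix.toEuclideanLin C (∑ i, c i • b i) = ∑ i, (c i * l i) • b i := by
      simp [map_sum, hb, smul_smul]
    rw [this, b.orthonormal.inner_sum]
    simp only [conj_trivial]
    exact Finset.sum_congr rfl fun i _ => by ring
  have hlaw : ∀ i, P.map (fun ω => ⟪X ω, b i⟫) = gaussianReal ⟪μ, b i⟫ (l i).toNNReal := by
    intro i
    rw [hX, hb, inner_smul_left]
    simp
  have hind : iIndepFun (fun i ω => ⟪X ω, b i⟫) P := by
    rw [iIndepFun_iff_charFun_pi (fun i => (hmi _).aemeasurable)]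
    intro c
    have h1 : charFun (P.map (fun ω => WithLp.toLp 2 fun i => ⟪X ω, b i⟫)) c
        = charFun (P.map (fun ω => ⟪X ω, ∑ i, c i • b i⟫)) 1 := by
      rw [charFun_apply, charFun_apply, integral_map, integral_map]
      · congr 1
        ext ω
        congr 2
        simp [inner_sum, inner_smul_right, PiLp.inner_apply]
      · exact (hmi _).aemeasurable
      · fun_prop
      · refine Measurable.aemeasurable ?_
        exact (WithLp.measurable_toLp 2 _).comp (measurable_pi_lambda _ fun i => hmi _)
      · fun_prop
    rw [h1, hX, charFun_gaussianReal]
    simp_rw [hlaw, charFun_gaussianReal]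
    rw [← Complex.exp_sum]
    congr 1
    rw [hvar, Real.coe_toNNReal _ (Finset.sum_nonneg fun i _ => mul_nonneg (hl i) (sq_nonneg _)),
      Finset.sum_sub_distrib]
    simp_rw [Real.coe_toNNReal _ (hl _)]
    simp [inner_sum, inner_smul_right, Finset.sum_mul, Finset.sum_div]
  have hnorm : ∀ ω, Real.exp (t * ‖X ω‖ ^ 2) = ∏ i, Real.exp (t * ⟪X ω, b i⟫ ^ 2) := by
    intro ω
    rw [← Real.exp_sum, ← Finset.mul_sum, ← b.sum_sq_norm_inner_left]
    simp
  simp_rw [hnorm]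
  rw [hind.integral_fun_prod_comp (f := fun _ x => Real.exp (t * x ^ 2))
    (fun i => (hmi _).aemeasurable) (fun i => by fun_prop), Real.exp_sum]
  refine Finset.prod_congr rfl fun i _ => ?_
  rw [← integral_map (f := fun x => Real.exp (t * x ^ 2)) (hmi _).aemeasurable (by fun_prop), hlaw,
    gauss_exp_sq _ _ _ (by rw [Real.coe_toNNReal _ (hl i)]; exact ht i), Real.coe_toNNReal _ (hl i)]

lemma coeff_zero_of_hasSum (c : ℕ → ℝ)
    (h : ∀ᶠ t in nhds (0 : ℝ), HasSum (fun k : ℕ => t ^ (k + 1) * c k) 0) : ∀ k, c k = 0 := by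
  let d : ℕ → ℝ := fun k => Nat.casesOn k 0 c
  have hd : HasFPowerSeriesAt (0 : ℝ → ℝ) (FormalMultilinearSeries.ofScalars ℝ d) 0 := by
    rw [hasFPowerSeriesAt_iff]
    filter_upwards [h] with t ht
    simp only [FormalMultilinearSeries.coeff_ofScalars, smul_eq_mul]
    rw [← hasSum_nat_add_iff' 1]
    simpa [d] using ht
  have h0 := hd.eq_zero
  intro k
  have := (FormalMultilinearSeries.coeff_ofScalars (𝕜 := ℝ) (p := d) (n := k + 1))
  rw [h0] at this
  simpa [d, FormalMultilinearSeries.coeff] using this.symm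

lemma hasSum_log_factor (l a t : ℝ) (h : |2 * t * l| < 1) :
    HasSum (fun k : ℕ => t ^ (k + 1) * (2 ^ k * l ^ (k + 1) / (k + 1) + a * 2 ^ k * l ^ k))
      (t * a / (1 - 2 * t * l) - 1 / 2 * Real.log (1 - 2 * t * l)) := by
  have h1 := (Real.hasSum_pow_div_log_of_abs_lt_one h).mul_left (1 / 2)
  have h2 := (hasSum_geometric_of_abs_lt_one h).mul_left (t * a)
  convert! h2.add h1 using 1
  · ext k
    simp only [mul_pow]
    ring
  · rw [div_eq_mul_inv]
    ring

lemma eventually_small (l : ℝ) : ∀ᶠ t in nhds (0 : ℝ), |2 * t * l| < 1 := by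
  have : Continuous fun t : ℝ => |2 * t * l| := by fun_prop
  exact this.continuousAt.eventually_lt_const (by simp)

lemma chi_rhs (r : ℕ) (ν t : ℝ) (h : 0 < 1 - 2 * t) :
    Real.exp (t * ν ^ 2 / (1 - 2 * t)) * (1 - 2 * t) ^ (-(r : ℝ) / 2) =
      Real.exp (t * ν ^ 2 / (1 - 2 * t) - r * (1 / 2 * Real.log (1 - 2 * t))) := by
  rw [Real.rpow_def_of_pos h, ← Real.exp_add]
  congr 1
  ring

lemma one_of_growth (l r a : ℝ) (hl : 0 ≤ l)
    (h : ∀ k : ℕ, l ^ (k + 1) ≤ r + (k + 1) * a) : l ≤ 1 := by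
  by_contra! hlt
  have h1 := tendsto_pow_const_div_const_pow_of_one_lt 1 hlt
  have h0 := tendsto_pow_const_div_const_pow_of_one_lt 0 hlt
  have h2 : Filter.Tendsto (fun k : ℕ => r * ((k : ℝ) ^ 0 / l ^ k) + a * ((k : ℝ) ^ 1 / l ^ k))
      Filter.atTop (nhds (r * 0 + a * 0)) := (h0.const_mul r).add (h1.const_mul a)
  have h3 := (Filter.tendsto_add_atTop_iff_nat 1).2 h2
  have h4 : (1 : ℝ) ≤ r * 0 + a * 0 := by
    refine ge_of_tendsto' h3 fun k => ?_
    have hp : 0 < l ^ (k + 1) := by positivity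
    have := h k
    have e : r * (((k + 1 : ℕ) : ℝ) ^ 0 / l ^ (k + 1)) + a * (((k + 1 : ℕ) : ℝ) ^ 1 / l ^ (k + 1))
        = (r + (k + 1) * a) / l ^ (k + 1) := by
      push_cast
      field_simp
    rw [e, one_le_div hp]
    exact this
  norm_num at h4

lemma moments_imp {n : ℕ} (l a : Fin n → ℝ) (hl : ∀ i, 0 ≤ l i) (ha : ∀ i, 0 ≤ a i) (r N : ℝ)
    (h : ∀ k : ℕ, ∑ i, (l i ^ (k + 1) + (k + 1) * a i * l i ^ k) = r + (k + 1) * N) :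
    (∀ i, l i = 0 ∨ l i = 1) ∧ (∀ i, l i = 0 → a i = 0) ∧ r = ∑ i, l i ∧ N = ∑ i, a i := by
  have hnn : ∀ (k : ℕ) i, 0 ≤ (k + 1) * a i * l i ^ k := fun k i => by
    have := hl i; have := ha i; positivity
  have hle : ∀ i, l i ≤ 1 := by
    intro i
    refine one_of_growth (l i) r N (hl i) fun k => ?_
    rw [← h k]
    have h1 := Finset.single_le_sum (f := fun i => l i ^ (k + 1) + (k + 1) * a i * l i ^ k)
      (fun i _ => add_nonneg (pow_nonneg (hl i) _) (hnn k i)) (Finset.mem_univ i)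
    have h2 := hnn k i
    linarith
  -- second difference
  have hk : ∃ k : ℕ, ∀ i, 0 ≤ (1 - l i) * ((k + 1) * (1 - l i) - 2 * l i) := by
    have : ∀ i, ∀ᶠ k : ℕ in Filter.atTop, 0 ≤ (1 - l i) * ((k + 1) * (1 - l i) - 2 * l i) := by
      intro i
      rcases (hle i).eq_or_lt with h1 | h1
      · simp [h1]
      · obtain ⟨K, hK⟩ := exists_nat_gt (2 * l i / (1 - l i))
        filter_upwards [Filter.eventually_ge_atTop K] with k hkK
        have hp : 0 < 1 - l i := by linarith
        rw [div_lt_iff₀ hp] at hK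
        have : (K : ℝ) ≤ k := by exact_mod_cast hkK
        refine mul_nonneg hp.le ?_
        nlinarith
    exact (Filter.eventually_all.2 this).exists
  obtain ⟨k, hk⟩ := hk
  have hsum : ∑ i, (l i ^ (k + 1) * (1 - l i) ^ 2 +
      a i * (l i ^ k * ((1 - l i) * ((k + 1) * (1 - l i) - 2 * l i)))) = 0 := by
    have e := congrArg₂ (fun x y => x + y) (congrArg₂ (fun x y => x - 2 * y) (h k) (h (k + 1)))
      (h (k + 2))
    simp only [Finset.mul_sum, ← Finset.sum_sub_distrib, ← Finset.sum_add_distrib] at e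
    have e2 : r + (k + 1) * N - 2 * (r + (((k + 1 : ℕ) : ℝ) + 1) * N)
        + (r + (((k + 2 : ℕ) : ℝ) + 1) * N) = 0 := by push_cast; ring
    rw [e2] at e
    rw [← e]
    refine Finset.sum_congr rfl fun i _ => ?_
    push_cast
    ring
  have hpos : ∀ i, 0 ≤ l i ^ (k + 1) * (1 - l i) ^ 2 := fun i =>
    mul_nonneg (pow_nonneg (hl i) _) (sq_nonneg _)
  have hpos' : ∀ i, 0 ≤ a i * (l i ^ k * ((1 - l i) * ((k + 1) * (1 - l i) - 2 * l i))) := fun i =>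
    mul_nonneg (ha i) (mul_nonneg (pow_nonneg (hl i) _) (hk i))
  have h01 : ∀ i, l i = 0 ∨ l i = 1 := by
    intro i
    have := (Finset.sum_eq_zero_iff_of_nonneg
      (fun i _ => add_nonneg (hpos i) (hpos' i))).1 hsum i (Finset.mem_univ i)
    have h3 : l i ^ (k + 1) * (1 - l i) ^ 2 = 0 := by
      have := hpos i; have := hpos' i; linarith
    rcases mul_eq_zero.1 h3 with h4 | h4
    · left; exact eq_zero_of_pow_eq_zero h4
    · right
      have := eq_zero_of_pow_eq_zero h4
      linarith
  have hpow : ∀ (j : ℕ) i, l i ^ (j + 1) = l i := by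
    intro j i
    rcases h01 i with h | h <;> simp [h]
  have q0 := h 0
  have q1 := h 1
  have q2 := h 2
  have s1 : ∑ i, l i + 2 * ∑ i, a i * l i = r + 2 * N := by
    rw [Finset.mul_sum, ← Finset.sum_add_distrib]
    convert q1 using 1
    · refine Finset.sum_congr rfl fun i _ => ?_
      rw [hpow]; push_cast; ring
    · push_cast; ring
  have s2 : ∑ i, l i + 3 * ∑ i, a i * l i = r + 3 * N := by
    rw [Finset.mul_sum, ← Finset.sum_add_distrib]
    convert q2 using 1
    · refine Finset.sum_congr rfl fun i _ => ?_
      rw [hpow, hpow 1]; push_cast; ring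
    · push_cast; ring
  have s0 : ∑ i, l i + ∑ i, a i = r + N := by
    rw [← Finset.sum_add_distrib]
    convert q0 using 1
    · refine Finset.sum_congr rfl fun i _ => ?_
      push_cast; ring
    · push_cast; ring
  refine ⟨h01, ?_, by linarith, by linarith⟩
  have hz : ∑ i, a i * (1 - l i) = 0 := by
    simp only [mul_sub, mul_one, Finset.sum_sub_distrib]
    linarith
  intro i hi
  have := (Finset.sum_eq_zero_iff_of_nonneg
    (fun i _ => mul_nonneg (ha i) (sub_nonneg.2 (hle i)))).1 hz i (Finset.mem_univ i)
  simpa [hi] using this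

lemma moments_of_mgf {n : ℕ} (l a : Fin n → ℝ) (r ν : ℝ)
    (h : ∀ᶠ t in nhds (0 : ℝ),
      ∑ i, (t * a i / (1 - 2 * t * l i) - 1 / 2 * Real.log (1 - 2 * t * l i)) =
        t * ν ^ 2 / (1 - 2 * t) - r * (1 / 2 * Real.log (1 - 2 * t))) (k : ℕ) :
    ∑ i, (l i ^ (k + 1) + (k + 1) * a i * l i ^ k) = r + (k + 1) * ν ^ 2 := by
  have hz := coeff_zero_of_hasSum (fun k : ℕ =>
    ∑ i, (2 ^ k * l i ^ (k + 1) / (k + 1) + a i * 2 ^ k * l i ^ k)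
      - (r * (2 ^ k / (k + 1)) + ν ^ 2 * 2 ^ k)) (by
    filter_upwards [h, eventually_small 1, Filter.eventually_all.2 fun i => eventually_small (l i)]
      with t ht h1 hli
    have s1 := hasSum_sum (s := Finset.univ) fun i _ => hasSum_log_factor (l i) (a i) t (hli i)
    have s2 := (hasSum_log_factor 1 (ν ^ 2) t h1).add
      ((hasSum_log_factor 1 0 t h1).mul_left (r - 1))
    convert! s1.sub s2 using 1
    · ext j
      rw [← Finset.mul_sum]
      simp only [one_pow]
      ring
    · rw [ht]
      simp only [mul_one]
      ring)
  have := hz k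
  have hk : (k : ℝ) + 1 ≠ 0 := by positivity
  have h2 : (2 : ℝ) ^ k ≠ 0 := by positivity
  have e : ∑ i, (2 ^ k * l i ^ (k + 1) / (k + 1) + a i * 2 ^ k * l i ^ k) =
      (2 ^ k / ((k : ℝ) + 1)) * ∑ i, (l i ^ (k + 1) + (k + 1) * a i * l i ^ k) := by
    rw [Finset.mul_sum]
    refine Finset.sum_congr rfl fun i _ => ?_
    field_simp
  rw [e] at this
  have e' : r * (2 ^ k / ((k : ℝ) + 1)) + ν ^ 2 * 2 ^ k
      = (2 ^ k / ((k : ℝ) + 1)) * (r + (k + 1) * ν ^ 2) := by field_simp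
  rw [e', ← mul_sub] at this
  rcases mul_eq_zero.1 this with h | h
  · exact absurd h (div_ne_zero h2 hk)
  · linarith

theorem norm_sq_gaussian_chiSquare_iff
    {Ω : Type*} [MeasurableSpace Ω] {n : ℕ}
    (P : Measure Ω) [IsProbabilityMeasure P]
    (X : Ω → EuclideanSpace ℝ (Fin n))
    (μ : EuclideanSpace ℝ (Fin n)) (C : Matrix (Fin n) (Fin n) ℝ)
    (hC : C.PosSemidef)
    (hX : IsMultivariateGaussian P X μ C) :
    ((∃ r : ℕ, ∃ ν : ℝ, 0 ≤ ν ∧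
        ∀ᶠ t in nhds (0 : ℝ),
          ∫ ω, Real.exp (t * ‖X ω‖ ^ 2) ∂P =
            Real.exp (t * ν ^ 2 / (1 - 2 * t)) * (1 - 2 * t) ^ (-(r : ℝ) / 2)) ↔
      C * C = C ∧ Matrix.toEuclideanLin C μ = μ) ∧
    ∀ r : ℕ, ∀ ν : ℝ, 0 ≤ ν →
      (∀ᶠ t in nhds (0 : ℝ),
          ∫ ω, Real.exp (t * ‖X ω‖ ^ 2) ∂P =
            Real.exp (t * ν ^ 2 / (1 - 2 * t)) * (1 - 2 * t) ^ (-(r : ℝ) / 2)) →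
      r = C.rank ∧ ν = ‖μ‖ := by
  have hH : C.IsHermitian := hC.1
  set b := hH.eigenvectorBasis with hbdef
  set l := hH.eigenvalues with hldef
  have hl : ∀ i, 0 ≤ l i := fun i => hC.eigenvalues_nonneg i
  have hb : ∀ i, Matrix.toEuclideanLin C (b i) = l i • b i := by
    intro i
    apply (WithLp.ofLp_injective 2)
    exact hH.mulVec_eigenvectorBasis i
  have hexp : ∀ x, Matrix.toEuclideanLin C x = ∑ j, (⟪b j, x⟫ * l j) • b j := by
    intro x
    conv_lhs => rw [← b.sum_repr' x]
    simp [map_sum, hb, smul_smul]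
  have hin : ∀ x i, ⟪b i, Matrix.toEuclideanLin C x⟫ = l i * ⟪b i, x⟫ := by
    intro x i
    rw [hexp, b.orthonormal.inner_right_fintype]
    ring
  set a : Fin n → ℝ := fun i => ⟪μ, b i⟫ ^ 2 with hadef
  have ha : ∀ i, 0 ≤ a i := fun i => sq_nonneg _
  have hasum : ∑ i, a i = ‖μ‖ ^ 2 := by
    rw [← b.sum_sq_norm_inner_left]
    simp [a]
  have hrank : (∀ i, l i = 0 ∨ l i = 1) → (C.rank : ℝ) = ∑ i, l i := by
    intro h
    rw [hH.rank_eq_card_non_zero_eigs, Fintype.card_subtype, Finset.card_filter]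
    push_cast
    refine Finset.sum_congr rfl fun i _ => ?_
    rcases h i with h | h
    · rw [← hldef]; simp [h]
    · rw [← hldef]; simp [h]
  have hmgf : ∀ᶠ t in nhds (0 : ℝ), 0 < 1 - 2 * t ∧ ∫ ω, Real.exp (t * ‖X ω‖ ^ 2) ∂P =
      Real.exp (∑ i, (t * a i / (1 - 2 * t * l i) - 1 / 2 * Real.log (1 - 2 * t * l i))) := by
    filter_upwards [eventually_small 1, Filter.eventually_all.2 fun i => eventually_small (l i)]
      with t h1 hli
    refine ⟨by have := (abs_lt.1 h1).2; linarith, ?_⟩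
    exact mgf_norm_sq P X μ C hX b l hl hb t fun i => by
      have := (abs_lt.1 (hli i)).2; linarith
  have forward : ∀ r : ℕ, ∀ ν : ℝ, (∀ᶠ t in nhds (0 : ℝ),
          ∫ ω, Real.exp (t * ‖X ω‖ ^ 2) ∂P =
            Real.exp (t * ν ^ 2 / (1 - 2 * t)) * (1 - 2 * t) ^ (-(r : ℝ) / 2)) →
      (∀ i, l i = 0 ∨ l i = 1) ∧ (∀ i, l i = 0 → a i = 0) ∧
        (r : ℝ) = ∑ i, l i ∧ ν ^ 2 = ∑ i, a i := by
    intro r ν h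
    refine moments_imp l a hl ha r (ν ^ 2) fun k => moments_of_mgf l a r ν ?_ k
    filter_upwards [h, hmgf] with t ht hm
    rw [hm.2, chi_rhs _ _ _ hm.1] at ht
    exact Real.exp_injective ht
  refine ⟨⟨?_, ?_⟩, ?_⟩
  · rintro ⟨r, ν, -, h⟩
    obtain ⟨h01, h0, -, -⟩ := forward r ν h
    constructor
    · apply Matrix.toEuclideanLin.injective
      refine b.toBasis.ext fun i => ?_
      have e : Matrix.toEuclideanLin (C * C) (b i)
          = Matrix.toEuclideanLin C (Matrix.toEuclideanLin C (b i)) := by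
        apply (WithLp.ofLp_injective 2)
        simp [Matrix.mulVec_mulVec]
      rw [b.coe_toBasis, e, hb, map_smul, hb, smul_smul]
      rcases h01 i with h | h <;> simp [h]
    · refine InnerProductSpace.ext_inner_left_basis (𝕜 := ℝ) b.toBasis fun i => ?_
      rw [b.coe_toBasis, hin]
      rcases h01 i with h | h
      · have := h0 i h
        have h2 : ⟪μ, b i⟫ = 0 := eq_zero_of_pow_eq_zero this
        rw [real_inner_comm, h2]
        simp
      · simp [h]
  · rintro ⟨hCC, hCμ⟩
    have h01 : ∀ i, l i = 0 ∨ l i = 1 := by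
      intro i
      have e : Matrix.toEuclideanLin (C * C) (b i)
          = Matrix.toEuclideanLin C (Matrix.toEuclideanLin C (b i)) := by
        apply (WithLp.ofLp_injective 2)
        simp [Matrix.mulVec_mulVec]
      rw [hCC, hb, map_smul, hb, smul_smul] at e
      have := smul_left_injective ℝ (b.toBasis.ne_zero i) (by simpa using e)
      have h2 : l i * (l i - 1) = 0 := by linarith
      rcases mul_eq_zero.1 h2 with h | h
      · exact Or.inl h
      · right; linarith
    have h0 : ∀ i, l i = 0 → a i = 0 := by
      intro i hi
      have := hin μ i
      rw [hCμ, hi, zero_mul, real_inner_comm] at this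
      simp [a, this]
    refine ⟨C.rank, ‖μ‖, norm_nonneg _, ?_⟩
    filter_upwards [hmgf] with t ht
    rw [ht.2, chi_rhs _ _ _ ht.1, hrank h01, ← hasum]
    congr 1
    rw [Finset.mul_sum, Finset.sum_div, Finset.sum_mul, ← Finset.sum_sub_distrib]
    refine Finset.sum_congr rfl fun i _ => ?_
    rcases h01 i with h | h
    · simp [h, h0 i h]
    · simp [h]
  · intro r ν hν h
    obtain ⟨h01, h0, hr, hN⟩ := forward r ν h
    constructor
    · rw [← hrank h01] at hr
      exact_mod_cast hr
    · rw [hasum] at hN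
      exact (sq_eq_sq₀ hν (norm_nonneg _)).1 hN
end

section
/- Let X be a random vector with values in EuclideanSpace ℝ (Fin n) whose distribution is the multivariate Gaussian measure with mean vector μ and symmetric positive semidefinite covariance matrix C. If C² = C and C μ = μ, then for every real t with t < 1/2, E[exp(t·‖X‖²)] = exp(t·‖μ‖²/(1−2t))·(1−2t)^(−(rank C)/2). -/
open MeasureTheory ProbabilityTheory
open scoped RealInnerProductSpace

open Real in
lemma aux_one (m t : ℝ) (ht : t < 1 / 2) :
    ∫ x, Real.exp (t * x ^ 2) ∂(gaussianReal m 1) =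
      Real.exp (t * m ^ 2 / (1 - 2 * t)) * (1 - 2 * t) ^ (-(1 : ℝ) / 2) := by
  have h0 : 0 < 1 - 2 * t := by linarith
  rw [integral_gaussianReal_eq_integral_smul (by norm_num)]
  have e : ∀ x : ℝ, gaussianPDFReal m 1 x • Real.exp (t * x ^ 2) =
      ((√(2 * π))⁻¹ * Real.exp (t * m ^ 2 / (1 - 2 * t))) *
        (fun y : ℝ => Real.exp (-((1 - 2 * t) / 2) * y ^ 2)) (x - m / (1 - 2 * t)) := by
    intro x
    simp only [gaussianPDFReal, smul_eq_mul, NNReal.coe_one, mul_one]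
    rw [mul_assoc, mul_assoc, ← Real.exp_add, ← Real.exp_add]
    congr 2
    field_simp
    ring
  simp_rw [e]
  rw [integral_const_mul,
    integral_sub_right_eq_self (fun y : ℝ => Real.exp (-((1 - 2 * t) / 2) * y ^ 2)),
    integral_gaussian]
  have : π / ((1 - 2 * t) / 2) = (2 * π) / (1 - 2 * t) := by field_simp
  rw [this, Real.sqrt_div (by positivity), neg_div, Real.rpow_neg h0.le, ← Real.sqrt_eq_rpow]
  have : √(2 * π) ≠ 0 := by positivity
  have : √(1 - 2 * t) ≠ 0 := by positivity
  field_simp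

lemma aux_law {Ω : Type*} [MeasurableSpace Ω] {n : ℕ}
    (P : Measure Ω) [IsProbabilityMeasure P]
    (X : Ω → EuclideanSpace ℝ (Fin n))
    (μ : EuclideanSpace ℝ (Fin n)) (C : Matrix (Fin n) (Fin n) ℝ)
    (hX : IsMultivariateGaussian P X μ C)
    (b : OrthonormalBasis (Fin n) ℝ (EuclideanSpace ℝ (Fin n))) (l : Fin n → ℝ)
    (hl : ∀ i, 0 ≤ l i)
    (hb : ∀ i, Matrix.toEuclideanLin C (b i) = l i • b i) :
    P.map (fun ω => b.repr (X ω)) =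
      (Measure.pi (fun i => gaussianReal (b.repr μ i) (l i).toNNReal)).map (WithLp.toLp 2) := by
  have hm : Measurable X := hX.1
  have : IsProbabilityMeasure (P.map (fun ω => b.repr (X ω))) :=
    Measure.isProbabilityMeasure_map (by fun_prop)
  apply Measure.ext_of_charFun (E := EuclideanSpace ℝ (Fin n))
  ext s
  have hq : ⟪Matrix.toEuclideanLin C (b.repr.symm s), b.repr.symm s⟫ = ∑ i, l i * s i ^ 2 := by
    have h1 : Matrix.toEuclideanLin C (b.repr.symm s) =
        b.repr.symm (WithLp.toLp 2 (fun i => l i * s i)) := by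
      rw [← b.sum_repr_symm, ← b.sum_repr_symm, map_sum]
      refine Finset.sum_congr rfl fun i _ => ?_
      rw [map_smul, hb, smul_smul, mul_comm]
    rw [h1, LinearIsometryEquiv.inner_map_map, PiLp.inner_apply]
    refine Finset.sum_congr rfl fun i _ => ?_
    simp
    ring
  have hmu : ⟪μ, b.repr.symm s⟫ = ∑ i, b.repr μ i * s i := by
    rw [← b.repr.inner_map_map, b.repr.apply_symm_apply, PiLp.inner_apply]
    refine Finset.sum_congr rfl fun i _ => ?_
    simp [mul_comm]
  have h2 : charFun (P.map (fun ω => b.repr (X ω))) s =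
      charFun (P.map (fun ω => ⟪X ω, b.repr.symm s⟫)) 1 := by
    rw [charFun_apply, charFun_apply_real, integral_map (by fun_prop) (by fun_prop),
      integral_map (by fun_prop) (by fun_prop)]
    refine integral_congr_ae (Filter.Eventually.of_forall fun ω => ?_)
    have : ⟪b.repr (X ω), s⟫ = ⟪X ω, b.repr.symm s⟫ := by
      rw [← b.repr.inner_map_map (X ω), b.repr.apply_symm_apply]
    simp [this]
  rw [h2, hX.2, charFun_pi, charFun_gaussianReal]
  simp_rw [charFun_gaussianReal]
  rw [← Complex.exp_sum, hq, hmu]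
  congr 1
  rw [Real.coe_toNNReal _ (Finset.sum_nonneg fun i _ => mul_nonneg (hl i) (sq_nonneg _))]
  simp_rw [fun i => Real.coe_toNNReal _ (hl i)]
  push_cast
  rw [Finset.sum_sub_distrib, ← Finset.sum_div, one_mul, one_pow, mul_one, Finset.sum_mul]
  congr 1
  refine Finset.sum_congr rfl fun i _ => ?_
  ring

theorem mgf_norm_sq_of_proj
    {Ω : Type*} [MeasurableSpace Ω] {n : ℕ}
    (P : Measure Ω) [IsProbabilityMeasure P]
    (X : Ω → EuclideanSpace ℝ (Fin n))
    (μ : EuclideanSpace ℝ (Fin n)) (C : Matrix (Fin n) (Fin n) ℝ)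
    (hC : C.PosSemidef)
    (hX : IsMultivariateGaussian P X μ C)
    (hCC : C * C = C) (hCμ : Matrix.toEuclideanLin C μ = μ) :
    ∀ t : ℝ, t < 1 / 2 →
      ∫ ω, Real.exp (t * ‖X ω‖ ^ 2) ∂P =
        Real.exp (t * ‖μ‖ ^ 2 / (1 - 2 * t)) * (1 - 2 * t) ^ (-(C.rank : ℝ) / 2) := by
  intro t ht
  have h0 : 0 < 1 - 2 * t := by linarith
  have hH := hC.isHermitian
  let b := hH.eigenvectorBasis
  let l := hH.eigenvalues
  have hl : ∀ i, 0 ≤ l i := hC.eigenvalues_nonneg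
  have hb : ∀ i, Matrix.toEuclideanLin C (b i) = l i • b i := by
    intro i
    have := hH.mulVec_eigenvectorBasis i
    ext j
    simpa using congrFun this j
  have hl01 : ∀ i, l i = 0 ∨ l i = 1 := by
    intro i
    have h1 : Matrix.toEuclideanLin C (Matrix.toEuclideanLin C (b i)) =
        Matrix.toEuclideanLin C (b i) := by
      ext j
      simp [Matrix.mulVec_mulVec, hCC]
    rw [hb, map_smul, hb, smul_smul] at h1
    have h2 := smul_left_injective ℝ (b.orthonormal.ne_zero i) h1
    have h3 : l i * (l i - 1) = 0 := by linarith
    rcases mul_eq_zero.1 h3 with h | h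
    · exact Or.inl h
    · exact Or.inr (by linarith)
  have hmu0 : ∀ i, l i = 0 → b.repr μ i = 0 := by
    intro i hi
    have hs : (Matrix.toEuclideanLin C).IsSymmetric := Matrix.isSymmetric_toEuclideanLin_iff.2 hH
    rw [b.repr_apply_apply, ← hCμ, ← hs, hb, hi, zero_smul, inner_zero_left]
  have hlaw := aux_law P X μ C hX b l hl hb
  have hm : Measurable X := hX.1
  have e1 : ∫ ω, Real.exp (t * ‖X ω‖ ^ 2) ∂P =
      ∫ y, Real.exp (t * ‖y‖ ^ 2) ∂(P.map (fun ω => b.repr (X ω))) := by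
    rw [integral_map (by fun_prop) (by fun_prop)]
    simp
  rw [e1, hlaw, integral_map (by fun_prop) (by fun_prop)]
  simp_rw [EuclideanSpace.real_norm_sq_eq, Finset.mul_sum, Real.exp_sum]
  rw [integral_fintype_prod_eq_prod (f := fun i (x : ℝ) => Real.exp (t * x ^ 2))]
  have e2 : ∀ i, ∫ x, Real.exp (t * x ^ 2) ∂(gaussianReal (b.repr μ i) (l i).toNNReal) =
      Real.exp (t * (b.repr μ i) ^ 2 / (1 - 2 * t)) *
        (if l i ≠ 0 then (1 - 2 * t) ^ (-(1 : ℝ) / 2) else 1) := by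
    intro i
    rcases hl01 i with h | h
    · simp [h, hmu0 i h]
    · simp only [h, Real.toNNReal_one]
      rw [aux_one _ _ ht]
      simp
  simp_rw [e2]
  rw [Finset.prod_mul_distrib, ← Real.exp_sum, Finset.prod_ite, Finset.prod_const,
    Finset.prod_const_one, mul_one, ← Finset.sum_div, ← Finset.mul_sum,
    ← EuclideanSpace.real_norm_sq_eq, LinearIsometryEquiv.norm_map,
    hH.rank_eq_card_non_zero_eigs, Fintype.card_subtype,
    ← Real.rpow_natCast ((1 - 2 * t) ^ (-(1 : ℝ) / 2)), ← Real.rpow_mul h0.le]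
  congr 1
  · rw [EuclideanSpace.real_norm_sq_eq, Finset.mul_sum]
  · congr 1
    change _ = -((Finset.univ.filter fun i => l i ≠ 0).card : ℝ) / 2
    ring
end

section
/- Let X be a random vector with values in EuclideanSpace ℝ (Fin n) whose distribution is the multivariate Gaussian measure with mean vector μ and symmetric positive semidefinite covariance matrix C. Suppose there exist r : ℕ and ν ≥ 0 such that for all real t in some neighborhood of 0, E[exp(t·‖X‖²)] = exp(t·ν²/(1−2t))·(1−2t)^(−r/2). Then C² = C, C μ = μ, r = rank C, and ν = ‖μ‖. -/
open MeasureTheory ProbabilityTheory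
open scoped RealInnerProductSpace

open Filter Topology

lemma key_comb {n : ℕ} (l m : Fin n → ℝ) (hl : ∀ i, 0 ≤ l i) (r : ℕ) (ν : ℝ)
    (h : ∀ k : ℕ, ∑ i, (l i ^ (k+1) + (k+1) * m i ^ 2 * l i ^ k) = ν ^ 2 * (k+1) + r) :
    (∀ i, (l i = 0 ∧ m i = 0) ∨ l i = 1) ∧ ∑ i, m i ^ 2 = ν ^ 2 ∧
      (r : ℝ) = ∑ i, l i := by
  have hpos : ∀ (k : ℕ) i, 0 ≤ l i ^ (k+1) + (k+1) * m i ^ 2 * l i ^ k := fun k i => by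
    have := hl i
    positivity
  have h1 : ∀ i, l i ≤ 1 := by
    intro i
    by_contra! hi
    have hb : ∀ k : ℕ, l i ^ (k+1) ≤ ν ^ 2 * (k+1) + r := by
      intro k
      rw [← h k]
      refine le_trans ?_ (Finset.single_le_sum (fun j _ => hpos k j) (Finset.mem_univ i))
      have := hl i
      have : 0 ≤ (k+1) * m i ^ 2 * l i ^ k := by positivity
      linarith
    have t1 := tendsto_pow_const_div_const_pow_of_one_lt 1 hi
    have t0 := tendsto_pow_const_div_const_pow_of_one_lt 0 hi
    have t2 : Tendsto (fun k : ℕ => ν ^ 2 * ((k:ℝ) ^ 1 / l i ^ k) + r * ((k:ℝ) ^ 0 / l i ^ k))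
        atTop (𝓝 (ν ^ 2 * 0 + r * 0)) := (t1.const_mul _).add (t0.const_mul _)
    have t3 := t2.comp (tendsto_add_atTop_nat 1)
    have : (1:ℝ) ≤ ν ^ 2 * 0 + r * 0 := by
      refine ge_of_tendsto' t3 fun k => ?_
      have hp : 0 < l i ^ (k+1) := by positivity
      have := hb k
      simp only [Function.comp]
      rw [← mul_div_assoc, ← mul_div_assoc, ← add_div, le_div_iff₀ hp]
      push_cast
      linarith
    norm_num at this
  set A := ν ^ 2 - ∑ i, (if l i = 1 then m i ^ 2 else 0) with hA
  set B := (r:ℝ) - ∑ i, (if l i = 1 then (1:ℝ) else 0) with hB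
  have hAB : ∀ k : ℕ, A * (k+1) + B =
      ∑ i, (if l i = 1 then 0 else (l i ^ (k+1) + (k+1) * m i ^ 2 * l i ^ k)) := by
    intro k
    have : A * (k+1) + B = (ν ^ 2 * (k+1) + r) - ∑ i, ((if l i = 1 then m i ^ 2 else 0) * (k+1) +
        (if l i = 1 then (1:ℝ) else 0)) := by
      rw [Finset.sum_add_distrib, ← Finset.sum_mul, hA, hB]; ring
    rw [this, ← h k, ← Finset.sum_sub_distrib]
    refine Finset.sum_congr rfl fun i _ => ?_
    split_ifs with hi
    · simp [hi]; ring
    · ring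
  have hlim : Tendsto (fun k : ℕ => A * (k+1) + B) atTop (𝓝 0) := by
    simp_rw [hAB]
    have : (0:ℝ) = ∑ i : Fin n, 0 := by simp
    rw [this]
    refine tendsto_finsetSum _ fun i _ => ?_
    split_ifs with hi
    · simp
    · have hlt : l i < 1 := lt_of_le_of_ne (h1 i) hi
      have t1 := tendsto_pow_const_mul_const_pow_of_lt_one 1 (hl i) hlt
      have t0 := tendsto_pow_const_mul_const_pow_of_lt_one 0 (hl i) hlt
      have := ((t0.const_mul (l i)).add (t1.const_mul (m i ^ 2))).add (t0.const_mul (m i ^ 2))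
      simp only [mul_zero, add_zero] at this
      refine this.congr fun k => ?_
      ring
  have hA0 : A = 0 := by
    have := (hlim.comp (tendsto_add_atTop_nat 1)).sub hlim
    simp only [sub_zero] at this
    refine tendsto_nhds_unique (tendsto_const_nhds.congr fun k => ?_) this
    simp; ring
  have hB0 : B = 0 := by
    simp only [hA0, zero_mul, zero_add] at hlim
    exact tendsto_nhds_unique tendsto_const_nhds hlim
  have h0 := hAB 0
  rw [hA0, hB0, zero_mul, zero_add] at h0
  rw [eq_comm, Finset.sum_eq_zero_iff_of_nonneg (fun i _ => by
    split_ifs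
    · exact le_rfl
    · exact hpos 0 i)] at h0
  have h2 := h0
  have h3 : ∀ i, (l i = 0 ∧ m i = 0) ∨ l i = 1 := by
    intro i
    by_cases hi : l i = 1
    · exact Or.inr hi
    · left
      have := h2 i (Finset.mem_univ i)
      simp [hi] at this
      have a := hl i
      have b := sq_nonneg (m i)
      exact ⟨by linarith, by apply pow_eq_zero_iff (two_ne_zero) |>.1; linarith⟩
  refine ⟨h3, ?_, ?_⟩
  · have : ν ^ 2 = ∑ i, (if l i = 1 then m i ^ 2 else 0) := by linarith
    rw [this]
    refine Finset.sum_congr rfl fun i _ => ?_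
    rcases h3 i with ⟨a, b⟩ | a <;> simp [*]
  · have : (r:ℝ) = ∑ i, (if l i = 1 then (1:ℝ) else 0) := by linarith
    rw [this]
    refine Finset.sum_congr rfl fun i _ => ?_
    rcases h3 i with ⟨a, b⟩ | a <;> simp [*]

lemma hasDerivAt_piece (c t a : ℝ) (k : ℕ) (ht : 1 - 2 * t * c ≠ 0) :
    HasDerivAt (fun t => a / (1 - 2 * t * c) ^ (k+1)) (2 * (k+1) * (a * c / (1 - 2 * t * c) ^ (k+2))) t := by
  have h1 : HasDerivAt (fun t : ℝ => 1 - 2 * t * c) (-(2 * c)) t := by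
    have := (((hasDerivAt_id t).const_mul 2).mul_const c).const_sub 1
    simpa using this
  have h2 := (h1.pow (k+1)).inv (pow_ne_zero _ ht)
  have h3 := h2.const_mul a
  simp only [div_eq_mul_inv]
  refine h3.congr_deriv ?_
  simp
  field_simp
  ring

lemma ev_ne (c : ℝ) : ∀ᶠ t in 𝓝 (0:ℝ), 0 < 1 - 2 * t * c := by
  have : Tendsto (fun t : ℝ => 1 - 2 * t * c) (𝓝 0) (𝓝 (1 - 2 * 0 * c)) := by
    apply Continuous.tendsto; fun_prop
  simp at this
  exact this.eventually (lt_mem_nhds one_pos)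

lemma coeffs {n : ℕ} (l m : Fin n → ℝ) (r : ℕ) (ν : ℝ)
    (h : ∀ᶠ t in 𝓝 (0:ℝ), ∑ i, (-(1/2) * Real.log (1 - 2 * t * l i) + t * m i ^ 2 / (1 - 2 * t * l i))
      = -(r/2) * Real.log (1 - 2 * t * 1) + t * ν ^ 2 / (1 - 2 * t * 1)) (k : ℕ) :
    ∀ᶠ t in 𝓝 (0:ℝ),
    ∑ i, (l i ^ (k+1) / (1 - 2 * t * l i) ^ (k+1) +
      (k+1) * m i ^ 2 * l i ^ k / (1 - 2 * t * l i) ^ (k+2)) =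
    r / (1 - 2 * t * 1) ^ (k+1) + (k+1) * ν ^ 2 / (1 - 2 * t * 1) ^ (k+2) := by
  have hne : ∀ᶠ t in 𝓝 (0:ℝ), ∀ i, 0 < 1 - 2 * t * l i := eventually_all.2 fun i => ev_ne _
  induction k with
  | zero =>
    have hd := EventuallyEq.deriv h
    have aux : ∀ c a b t : ℝ, 0 < 1 - 2 * t * c → HasDerivAt
        (fun t => -(a/2) * Real.log (1 - 2 * t * c) + t * b / (1 - 2 * t * c))
        (a * c / (1 - 2 * t * c) ^ 1 + b / (1 - 2 * t * c) ^ 2) t := by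
      intro c a b t ht
      have h1 : HasDerivAt (fun t : ℝ => 1 - 2 * t * c) (-(2 * c)) t := by
        have := (((hasDerivAt_id t).const_mul 2).mul_const c).const_sub 1
        simpa using this
      have h2 := (h1.log ht.ne').const_mul (-(a/2))
      have h3 := ((hasDerivAt_id t).mul_const b).div h1 ht.ne'
      refine (h2.add h3).congr_deriv ?_
      have := ht.ne'
      simp
      field_simp
      ring
    filter_upwards [hd, hne, ev_ne 1] with t ht hn h1
    have e1 := HasDerivAt.fun_sum (u := Finset.univ) fun i _ => aux (l i) 1 (m i ^ 2) t (hn i)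
    have e2 := aux 1 r (ν ^ 2) t h1
    rw [e1.deriv, e2.deriv] at ht
    simpa using ht
  | succ k ih =>
    have hd := EventuallyEq.deriv ih
    filter_upwards [hd, hne, ev_ne 1] with t ht hn h1
    have e1 := HasDerivAt.fun_sum (u := Finset.univ) fun i _ =>
      (hasDerivAt_piece (l i) t (l i ^ (k+1)) k (hn i).ne').add
      (hasDerivAt_piece (l i) t ((k+1) * m i ^ 2 * l i ^ k) (k+1) (hn i).ne')
    have e2 := (hasDerivAt_piece 1 t r k h1.ne').add
      (hasDerivAt_piece 1 t ((k+1) * ν ^ 2) (k+1) h1.ne')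
    have e3 := e1.deriv.symm.trans (ht.trans e2.deriv)
    have hk : (2 * ((k:ℝ)+1)) ≠ 0 := by positivity
    apply mul_left_cancel₀ hk
    rw [Finset.mul_sum]
    convert e3 using 1
    · refine Finset.sum_congr rfl fun i _ => ?_
      push_cast
      ring
    · push_cast
      ring

lemma gauss_sq (m l t : ℝ) (hl : 0 ≤ l) (ht : 0 < 1 - 2 * t * l) :
    ∫ x, Real.exp (t * x ^ 2) ∂(gaussianReal m l.toNNReal) =
      Real.exp (-(1/2) * Real.log (1 - 2 * t * l) + t * m ^ 2 / (1 - 2 * t * l)) := by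
  rcases hl.eq_or_lt with rfl | hl0
  · simp
  · have hv : l.toNNReal ≠ 0 := by simpa using hl0
    rw [integral_gaussianReal_eq_integral_smul hv]
    simp only [gaussianPDFReal, Real.coe_toNNReal l hl, smul_eq_mul]
    set d := 1 - 2 * t * l with hd
    have hdl : t = (1 - d) / (2 * l) := by rw [hd]; field_simp; ring
    have e : ∀ x : ℝ, (√(2 * Real.pi * l))⁻¹ * Real.exp (-(x - m) ^ 2 / (2 * l)) * Real.exp (t * x ^ 2)
        = ((√(2 * Real.pi * l))⁻¹ * Real.exp (t * m ^ 2 / d)) *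
          Real.exp (-(d / (2 * l)) * (x - m / d) ^ 2) := by
      intro x
      rw [mul_assoc (√(2 * Real.pi * l))⁻¹, mul_assoc (√(2 * Real.pi * l))⁻¹, ← Real.exp_add,
        ← Real.exp_add]
      congr 2
      rw [hdl]
      field_simp
      ring
    simp_rw [e]
    rw [integral_const_mul, integral_sub_right_eq_self (fun x => Real.exp (-(d / (2 * l)) * x ^ 2)),
      integral_gaussian, Real.exp_add]
    have : Real.exp (-(1/2) * Real.log d) = (√d)⁻¹ := by
      rw [Real.sqrt_eq_rpow, ← Real.rpow_neg ht.le, Real.rpow_def_of_pos ht]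
      congr 1; ring
    rw [this]
    have : Real.pi / (d / (2 * l)) = (2 * Real.pi * l) / d := by field_simp
    rw [this, Real.sqrt_div (by positivity)]
    have : √(2 * Real.pi * l) ≠ 0 := by positivity
    field_simp

/-- the law of the coordinates in an orthonormal eigenbasis is a product of Gaussians -/
lemma law_coords {Ω : Type*} [MeasurableSpace Ω] {n : ℕ}
    (P : Measure Ω) [IsProbabilityMeasure P]
    (X : Ω → EuclideanSpace ℝ (Fin n)) (hXm : Measurable X)
    (μ : EuclideanSpace ℝ (Fin n)) (C : Matrix (Fin n) (Fin n) ℝ)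
    (hX : ∀ v : EuclideanSpace ℝ (Fin n),
      P.map (fun ω => ⟪X ω, v⟫) =
        gaussianReal ⟪μ, v⟫ (⟪Matrix.toEuclideanLin C v, v⟫).toNNReal)
    (b : OrthonormalBasis (Fin n) ℝ (EuclideanSpace ℝ (Fin n))) (l : Fin n → ℝ)
    (hl : ∀ i, 0 ≤ l i) (hb : ∀ i, Matrix.toEuclideanLin C (b i) = l i • b i) :
    P.map (fun ω => b.repr (X ω)) =
      (Measure.pi fun i => gaussianReal (b.repr μ i) (l i).toNNReal).map (WithLp.toLp 2) := by
  have hm : Measurable (fun ω => b.repr (X ω)) := b.repr.continuous.measurable.comp hXm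
  have hpm : IsProbabilityMeasure (P.map (fun ω => b.repr (X ω))) :=
    Measure.isProbabilityMeasure_map hm.aemeasurable
  have hpm2 : IsProbabilityMeasure ((Measure.pi fun i => gaussianReal (b.repr μ i) (l i).toNNReal).map
      (WithLp.toLp 2 : (Fin n → ℝ) → EuclideanSpace ℝ (Fin n))) :=
    Measure.isProbabilityMeasure_map (by fun_prop)
  apply Measure.ext_of_charFun
  ext s
  have h1 : charFun (P.map (fun ω => b.repr (X ω))) s =
      charFun (P.map (fun ω => ⟪X ω, b.repr.symm s⟫)) 1 := by
    have hm2 : Measurable (fun ω => ⟪X ω, b.repr.symm s⟫) := by fun_prop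
    rw [charFun_apply, charFun_apply, integral_map hm.aemeasurable
      (Measurable.aestronglyMeasurable (by fun_prop)),
      integral_map hm2.aemeasurable (Measurable.aestronglyMeasurable (by fun_prop))]
    congr 1
    ext ω
    have : ⟪b.repr (X ω), s⟫ = ⟪X ω, b.repr.symm s⟫ := by
      rw [← b.repr.inner_map_map (X ω), b.repr.apply_symm_apply]
    rw [this]
    simp
  have h2 : ⟪μ, b.repr.symm s⟫ = ∑ i, b.repr μ i * s i := by
    rw [← b.repr.inner_map_map, b.repr.apply_symm_apply]
    simp [PiLp.inner_apply, mul_comm]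
  have h3 : ⟪Matrix.toEuclideanLin C (b.repr.symm s), b.repr.symm s⟫ = ∑ i, l i * s i ^ 2 := by
    have e : b.repr.symm s = ∑ i, s i • b i := (b.sum_repr_symm s).symm
    have e2 : Matrix.toEuclideanLin C (b.repr.symm s) = ∑ i, (l i * s i) • b i := by
      rw [e, map_sum]
      refine Finset.sum_congr rfl fun i _ => ?_
      rw [map_smul, hb, smul_smul, mul_comm]
    rw [e2, e, b.orthonormal.inner_sum]
    simp
    refine Finset.sum_congr rfl fun i _ => ?_
    ring
  have h4 : 0 ≤ ∑ i, l i * s i ^ 2 := Finset.sum_nonneg fun i _ => by have := hl i; positivity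
  rw [h1, hX, charFun_gaussianReal, h2, h3, charFun_pi]
  simp_rw [charFun_gaussianReal, Real.coe_toNNReal _ h4, Real.coe_toNNReal _ (hl _)]
  rw [← Complex.exp_sum]
  congr 1
  push_cast
  rw [Finset.sum_sub_distrib, Finset.mul_sum, Finset.sum_mul, Finset.sum_mul, Finset.sum_div]
  congr 1
  · exact Finset.sum_congr rfl fun i _ => by ring
  · exact Finset.sum_congr rfl fun i _ => by ring

lemma mgf_eq {Ω : Type*} [MeasurableSpace Ω] {n : ℕ}
    (P : Measure Ω) [IsProbabilityMeasure P]
    (X : Ω → EuclideanSpace ℝ (Fin n)) (hXm : Measurable X)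
    (μ : EuclideanSpace ℝ (Fin n))
    (b : OrthonormalBasis (Fin n) ℝ (EuclideanSpace ℝ (Fin n))) (l : Fin n → ℝ)
    (hl : ∀ i, 0 ≤ l i)
    (hlaw : P.map (fun ω => b.repr (X ω)) =
      (Measure.pi fun i => gaussianReal (b.repr μ i) (l i).toNNReal).map (WithLp.toLp 2))
    (t : ℝ) (ht : ∀ i, 0 < 1 - 2 * t * l i) :
    ∫ ω, Real.exp (t * ‖X ω‖ ^ 2) ∂P = Real.exp (∑ i, (-(1/2) * Real.log (1 - 2 * t * l i)
      + t * b.repr μ i ^ 2 / (1 - 2 * t * l i))) := by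
  have hm : Measurable (fun ω => b.repr (X ω)) := b.repr.continuous.measurable.comp hXm
  have h1 : ∫ ω, Real.exp (t * ‖X ω‖ ^ 2) ∂P =
      ∫ y, Real.exp (t * ‖y‖ ^ 2) ∂(P.map (fun ω => b.repr (X ω))) := by
    rw [integral_map hm.aemeasurable (Measurable.aestronglyMeasurable (by fun_prop))]
    simp
  rw [h1, hlaw, integral_map (by fun_prop) (Measurable.aestronglyMeasurable (by fun_prop))]
  simp_rw [EuclideanSpace.real_norm_sq_eq, Finset.mul_sum, Real.exp_sum]
  rw [integral_fintype_prod_eq_prod (f := fun i x => Real.exp (t * x ^ 2))]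
  exact Finset.prod_congr rfl fun i _ => gauss_sq _ _ _ (hl i) (ht i)

theorem of_mgf_chiSquare
    {Ω : Type*} [MeasurableSpace Ω] {n : ℕ}
    (P : Measure Ω) [IsProbabilityMeasure P]
    (X : Ω → EuclideanSpace ℝ (Fin n))
    (μ : EuclideanSpace ℝ (Fin n)) (C : Matrix (Fin n) (Fin n) ℝ)
    (hC : C.PosSemidef)
    (hX : IsMultivariateGaussian P X μ C)
    (r : ℕ) (ν : ℝ) (hν : 0 ≤ ν)
    (hmgf : ∀ᶠ t in nhds (0 : ℝ),
      ∫ ω, Real.exp (t * ‖X ω‖ ^ 2) ∂P =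
        Real.exp (t * ν ^ 2 / (1 - 2 * t)) * (1 - 2 * t) ^ (-(r : ℝ) / 2)) :
    C * C = C ∧ Matrix.toEuclideanLin C μ = μ ∧ r = C.rank ∧ ν = ‖μ‖ := by
  obtain ⟨hXm, hXl⟩ := hX
  set b := hC.1.eigenvectorBasis with hbdef
  set l := hC.1.eigenvalues with hldef
  have hl : ∀ i, 0 ≤ l i := hC.eigenvalues_nonneg
  have hb : ∀ i, Matrix.toEuclideanLin C (b i) = l i • b i := by
    intro i
    have := hC.1.mulVec_eigenvectorBasis i
    ext j
    simpa [Matrix.toEuclideanLin_apply] using congrFun this j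
  have hlaw := law_coords P X hXm μ C hXl b l hl hb
  have hne : ∀ᶠ t in 𝓝 (0:ℝ), ∀ i, 0 < 1 - 2 * t * l i := eventually_all.2 fun i => ev_ne _
  have hlog : ∀ᶠ t in 𝓝 (0:ℝ), ∑ i, (-(1/2) * Real.log (1 - 2 * t * l i)
        + t * b.repr μ i ^ 2 / (1 - 2 * t * l i))
      = -(r/2) * Real.log (1 - 2 * t * 1) + t * ν ^ 2 / (1 - 2 * t * 1) := by
    filter_upwards [hmgf, hne, ev_ne 1] with t ht hn h1
    rw [mgf_eq P X hXm μ b l hl hlaw t hn] at ht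
    simp only [mul_one] at h1 ⊢
    rw [Real.rpow_def_of_pos h1, ← Real.exp_add] at ht
    rw [Real.exp_injective ht]
    ring
  have hco : ∀ k : ℕ, ∑ i, (l i ^ (k+1) + (k+1) * b.repr μ i ^ 2 * l i ^ k)
      = ν ^ 2 * (k+1) + r := by
    intro k
    have := (coeffs l (fun i => b.repr μ i) r ν hlog k).self_of_nhds
    simp only [mul_zero, zero_mul, sub_zero, one_pow, div_one] at this
    rw [this]
    ring
  obtain ⟨h1, h2, h3⟩ := key_comb l (fun i => b.repr μ i) hl r ν hco
  have hll : ∀ i, l i * l i = l i := by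
    intro i
    rcases h1 i with ⟨h, -⟩ | h <;> simp [h]
  refine ⟨?_, ?_, ?_, ?_⟩
  · apply Matrix.toEuclideanLin.injective
    refine b.toBasis.ext fun i => ?_
    have e : Matrix.toEuclideanLin (C * C) (b i) =
        Matrix.toEuclideanLin C (Matrix.toEuclideanLin C (b i)) := by
      simp [Matrix.toEuclideanLin_apply, Matrix.mulVec_mulVec]
    rw [b.coe_toBasis, e, hb, map_smul, hb, smul_smul, hll]
  · conv_lhs => rw [← b.sum_repr μ]
    conv_rhs => rw [← b.sum_repr μ]
    rw [map_sum]
    refine Finset.sum_congr rfl fun i _ => ?_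
    rw [map_smul, hb]
    rcases h1 i with ⟨-, h⟩ | h <;> simp [h]
  · rw [hC.1.rank_eq_card_non_zero_eigs, Fintype.card_subtype]
    have : (r : ℝ) = ((Finset.univ.filter fun i => l i ≠ 0).card : ℝ) := by
      rw [h3, Finset.card_filter]
      push_cast
      refine Finset.sum_congr rfl fun i _ => ?_
      rcases h1 i with ⟨h, -⟩ | h <;> simp [h]
    exact_mod_cast this
  · have : ν ^ 2 = ‖μ‖ ^ 2 := by
      rw [← h2, ← b.repr.norm_map μ, EuclideanSpace.real_norm_sq_eq]
    exact (sq_eq_sq₀ hν (norm_nonneg _)).1 this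
end

section
/- Let X be a random vector with values in EuclideanSpace ℝ (Fin n) whose distribution is the multivariate Gaussian measure with mean vector μ and symmetric positive semidefinite covariance matrix C. Then there exists ε > 0 such that for all real t with |t| < ε, the matrix I − 2tC is invertible and E[exp(t·‖X‖²)] = exp(t·⟪μ, (I − 2tC)⁻¹ μ⟫)·(det(I − 2tC))^(−1/2). -/
open MeasureTheory ProbabilityTheory
open scoped RealInnerProductSpace

lemma aux1 (m : ℝ) (v : NNReal) (t : ℝ) (h : 0 < 1 - 2 * t * v) :
    ∫ y, Real.exp (t * y ^ 2) ∂(gaussianReal m v) =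
      Real.exp (t * (m ^ 2 / (1 - 2 * t * v))) * (1 - 2 * t * v) ^ (-(1 : ℝ) / 2) := by
  by_cases hv : v = 0
  · subst hv; simp
  have hv' : (0 : ℝ) < v := by positivity
  rw [integral_gaussianReal_eq_integral_smul hv]
  have key : ∀ y : ℝ, gaussianPDFReal m v y • Real.exp (t * y ^ 2) =
      ((√(2 * Real.pi * v))⁻¹ * Real.exp (t * (m ^ 2 / (1 - 2 * t * v)))) *
        Real.exp (-((1 - 2 * t * v) / (2 * v)) * (y - m / (1 - 2 * t * v)) ^ 2) := by
    intro y
    rw [gaussianPDFReal, smul_eq_mul, mul_assoc, mul_assoc (_⁻¹), ← Real.exp_add,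
      ← Real.exp_add]
    congr 2
    obtain ⟨d, hd⟩ : ∃ d, d = 1 - 2 * t * (v : ℝ) := ⟨_, rfl⟩
    have ht : t = (1 - d) / (2 * v) := by rw [hd]; field_simp; ring
    rw [← hd] at h ⊢
    have := h.ne'
    rw [ht]
    field_simp
    ring
  simp_rw [key]
  rw [integral_const_mul,
    integral_sub_right_eq_self (fun y => Real.exp (-((1 - 2 * t * v) / (2 * v)) * y ^ 2)),
    integral_gaussian]
  have e : Real.pi / ((1 - 2 * t * v) / (2 * v)) = (2 * Real.pi * v) / (1 - 2 * t * v) := by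
    field_simp
  rw [e, Real.sqrt_div (by positivity), show (-(1:ℝ)/2) = -(1/2) by ring, Real.rpow_neg h.le,
    ← Real.sqrt_eq_rpow]
  have : √(2 * Real.pi * v) ≠ 0 := by positivity
  field_simp

lemma aux2 {Ω : Type*} [MeasurableSpace Ω] {n : ℕ} (P : Measure Ω) [IsProbabilityMeasure P]
    (X : Ω → EuclideanSpace ℝ (Fin n)) (μ : EuclideanSpace ℝ (Fin n))
    (C : Matrix (Fin n) (Fin n) ℝ) (hm : Measurable X)
    (b : OrthonormalBasis (Fin n) ℝ (EuclideanSpace ℝ (Fin n))) (l : Fin n → NNReal)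
    (hb : ∀ i, Matrix.toEuclideanLin C (b i) = (l i : ℝ) • b i)
    (hX : ∀ v : EuclideanSpace ℝ (Fin n),
      P.map (fun ω => ⟪X ω, v⟫) =
        gaussianReal ⟪μ, v⟫ (⟪Matrix.toEuclideanLin C v, v⟫).toNNReal) :
    P.map (fun ω => b.repr (X ω)) =
      (Measure.pi (fun i => gaussianReal ⟪b i, μ⟫ (l i))).map (WithLp.toLp 2) := by
  have hm2 : Measurable (fun ω => b.repr (X ω)) := by fun_prop
  have : IsProbabilityMeasure (P.map (fun ω => b.repr (X ω))) :=
    Measure.isProbabilityMeasure_map hm2.aemeasurable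
  apply Measure.ext_of_charFun (E := EuclideanSpace ℝ (Fin n))
  ext s
  rw [charFun_pi]
  have h1 : charFun (P.map (fun ω => b.repr (X ω))) s =
      charFun (P.map (fun ω => ⟪X ω, b.repr.symm s⟫)) 1 := by
    rw [charFun_apply, charFun_apply_real, integral_map hm2.aemeasurable
      (Measurable.aestronglyMeasurable (by fun_prop)), integral_map
      (Measurable.aemeasurable (by fun_prop)) (Measurable.aestronglyMeasurable (by fun_prop))]
    congr 1; ext ω
    rw [← b.repr.inner_map_map (X ω)]
    simp
  have hs : b.repr.symm s = ∑ i, s i • b i := by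
    rw [OrthonormalBasis.sum_repr_symm]
  have h2 : ⟪Matrix.toEuclideanLin C (b.repr.symm s), b.repr.symm s⟫ = ∑ i, (l i : ℝ) * s i ^ 2 := by
    rw [hs]
    simp only [map_sum, map_smul, hb]
    simp_rw [smul_comm (s _) ((l _ : NNReal) : ℝ), smul_smul]
    rw [b.orthonormal.inner_sum]
    simp
    exact Finset.sum_congr rfl fun i _ => by ring
  have h3 : ⟪μ, b.repr.symm s⟫ = ∑ i, ⟪b i, μ⟫ * s i := by
    rw [hs, inner_sum]
    simp [inner_smul_right, real_inner_comm, mul_comm]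
  rw [h1, hX, h2, h3]
  simp_rw [charFun_gaussianReal]
  rw [← Complex.exp_sum, Real.coe_toNNReal _ (Finset.sum_nonneg fun i _ => by positivity)]
  congr 1
  push_cast
  simp only [Finset.sum_sub_distrib, Finset.sum_mul, Finset.mul_sum, Finset.sum_div]
  congr 1 <;> exact Finset.sum_congr rfl fun i _ => by ring

lemma aux3 {n : ℕ} (M : Matrix (Fin n) (Fin n) ℝ)
    (b : OrthonormalBasis (Fin n) ℝ (EuclideanSpace ℝ (Fin n))) (d : Fin n → ℝ)
    (hb : ∀ i, Matrix.toEuclideanLin M (b i) = d i • b i) : M.det = ∏ i, d i := by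
  have h : LinearMap.toMatrix b.toBasis b.toBasis (Matrix.toEuclideanLin M) =
      Matrix.diagonal d := by
    ext i j
    rw [LinearMap.toMatrix_apply, OrthonormalBasis.coe_toBasis, hb,
      ← OrthonormalBasis.coe_toBasis, map_smul, Module.Basis.repr_self]
    by_cases hij : i = j
    · subst hij; simp
    · simp [hij, Ne.symm hij, Finsupp.single_apply, eq_comm]
  rw [← Matrix.det_diagonal, ← h, LinearMap.det_toMatrix, Matrix.toEuclideanLin, Matrix.toLpLin_eq_toLin,
    LinearMap.det_toLin]

lemma aux4 {n : ℕ} (M : Matrix (Fin n) (Fin n) ℝ) (hM : IsUnit M)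
    (b : OrthonormalBasis (Fin n) ℝ (EuclideanSpace ℝ (Fin n))) (d : Fin n → ℝ)
    (hd : ∀ i, d i ≠ 0)
    (hb : ∀ i, Matrix.toEuclideanLin M (b i) = d i • b i) (x : EuclideanSpace ℝ (Fin n)) :
    ⟪x, Matrix.toEuclideanLin M⁻¹ x⟫ = ∑ i, ⟪b i, x⟫ ^ 2 / d i := by
  have hi : ∀ i, Matrix.toEuclideanLin M⁻¹ (b i) = (d i)⁻¹ • b i := by
    intro i
    have h1 : Matrix.toEuclideanLin M⁻¹ (Matrix.toEuclideanLin M (b i)) = b i := by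
      simp [Matrix.toLpLin_apply, Matrix.nonsing_inv_mul M
        ((Matrix.isUnit_iff_isUnit_det M).1 hM)]
    rw [hb, map_smul] at h1
    rw [eq_inv_smul_iff₀ (hd i), h1]
  conv_lhs => rw [← b.sum_repr' x]
  simp only [map_sum, map_smul, hi, smul_smul]
  rw [b.orthonormal.inner_sum]
  exact Finset.sum_congr rfl fun i _ => by simp; ring

theorem mgf_norm_sq_gaussian
    {Ω : Type*} [MeasurableSpace Ω] {n : ℕ}
    (P : Measure Ω) [IsProbabilityMeasure P]
    (X : Ω → EuclideanSpace ℝ (Fin n))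
    (μ : EuclideanSpace ℝ (Fin n)) (C : Matrix (Fin n) (Fin n) ℝ)
    (hC : C.PosSemidef)
    (hX : IsMultivariateGaussian P X μ C) :
    ∃ ε > (0 : ℝ), ∀ t : ℝ, |t| < ε →
      IsUnit ((1 : Matrix (Fin n) (Fin n) ℝ) - (2 * t) • C) ∧
      ∫ ω, Real.exp (t * ‖X ω‖ ^ 2) ∂P =
        Real.exp (t * ⟪μ, Matrix.toEuclideanLin ((1 - (2 * t) • C)⁻¹) μ⟫) *
          ((1 : Matrix (Fin n) (Fin n) ℝ) - (2 * t) • C).det ^ (-(1 : ℝ) / 2) := by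
  obtain ⟨hm, hX⟩ := hX
  let b := hC.isHermitian.eigenvectorBasis
  let l : Fin n → NNReal := fun i => ⟨hC.isHermitian.eigenvalues i, hC.eigenvalues_nonneg i⟩
  have hb : ∀ i, Matrix.toEuclideanLin C (b i) = (l i : ℝ) • b i := by
    intro i
    have := hC.isHermitian.mulVec_eigenvectorBasis i
    rw [Matrix.toLpLin_apply, this]
    rfl
  have hlaw := aux2 P X μ C hm b l hb hX
  have hS : 0 ≤ ∑ i, (l i : ℝ) := Finset.sum_nonneg fun i _ => (l i).2
  refine ⟨1 / (2 * (1 + ∑ i, (l i : ℝ))), by positivity, fun t ht => ?_⟩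
  have hd : ∀ i, 0 < 1 - 2 * t * l i := by
    intro i
    have h1 : (l i : ℝ) ≤ ∑ i, (l i : ℝ) :=
      Finset.single_le_sum (f := fun i => (l i : ℝ)) (fun i _ => (l i).2) (Finset.mem_univ i)
    rw [lt_div_iff₀ (by positivity)] at ht
    have h2 := mul_le_mul_of_nonneg_right (le_abs_self t) (l i).2
    have h3 := mul_le_mul_of_nonneg_left h1 (abs_nonneg t)
    have h4 := abs_nonneg t
    have h5 : t * (l i : ℝ) ≤ |t| * (l i : ℝ) := h2
    nlinarith
  have hMb : ∀ i, Matrix.toEuclideanLin ((1 : Matrix (Fin n) (Fin n) ℝ) - (2 * t) • C) (b i) =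
      (1 - 2 * t * l i) • b i := by
    intro i
    rw [map_sub, map_smul, LinearMap.sub_apply, LinearMap.smul_apply, hb, sub_smul, smul_smul]
    simp
  have hdet := aux3 _ b _ hMb
  have hu : IsUnit ((1 : Matrix (Fin n) (Fin n) ℝ) - (2 * t) • C) := by
    rw [Matrix.isUnit_iff_isUnit_det, hdet, isUnit_iff_ne_zero]
    exact Finset.prod_ne_zero_iff.2 fun i _ => (hd i).ne'
  refine ⟨hu, ?_⟩
  rw [hdet, aux4 _ hu b _ (fun i => (hd i).ne') hMb,
    ← Real.finsetProd_rpow _ _ (fun i _ => (hd i).le), Finset.mul_sum, Real.exp_sum,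
    ← Finset.prod_mul_distrib]
  have h1 : ∫ ω, Real.exp (t * ‖X ω‖ ^ 2) ∂P =
      ∫ y, Real.exp (t * ‖y‖ ^ 2) ∂(P.map (fun ω => b.repr (X ω))) := by
    rw [integral_map (Measurable.aemeasurable (by fun_prop))
      (Measurable.aestronglyMeasurable (by fun_prop))]
    simp
  rw [h1, hlaw, integral_map (Measurable.aemeasurable (by fun_prop))
      (Measurable.aestronglyMeasurable (by fun_prop))]
  simp_rw [EuclideanSpace.real_norm_sq_eq, Finset.mul_sum, Real.exp_sum]
  rw [integral_fintype_prod_eq_prod (f := fun _ y => Real.exp (t * y ^ 2))]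
  exact Finset.prod_congr rfl fun i _ => aux1 _ _ _ (hd i)
end
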